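/- arXiv:1112.4346 — 4 statements merged into one kernel-verified Lean document; each statement's English description precedes it below -/
import Mathlib

section
/- Let p, q ∈ [1, ∞) and C > 0. Let D be a linear subspace of the space of measurable functions ℝ → ℂ, and let (T_j)_{j ∈ ℕ} be linear maps from D to measurable functions ℝ → ℂ satisfying the weak p–q Stepanov bound: for every g ∈ D and every λ > 0, sup_{x ∈ ℝ} |{s ∈ [x, x+1] : sup_{j ∈ ℕ} |T_j g(s)| > λ}| ≤ C (‖g‖_{S^p} / λ)^q. Suppose f ∈ D and (f_n)_{n ∈ ℕ} ⊆ D satisfy ‖f_n − f‖_{S^p} → 0 as n → ∞, and for each n, T_j f_n(x) → f_n(x) as j → ∞ for almost every x ∈ ℝ. Then T_j f(x) → f(x) as j → ∞ for almost every x ∈ ℝ. -/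
open MeasureTheory Filter

/-- The Stepanov `S^p` "norm" of a function `f : ℝ → ℂ`, valued in `ℝ≥0∞`:
`‖f‖_{S^p} = (sup_{x ∈ ℝ} ∫_x^{x+1} |f(s)|^p ds)^{1/p}`. -/
noncomputable def stepanov (p : ℝ) (f : ℝ → ℂ) : ENNReal :=
  (⨆ x : ℝ, ∫⁻ s in Set.Ioc x (x + 1), (‖f s‖₊ : ENNReal) ^ p) ^ (1 / p)

/-!
Convergence in `S^p` is convergence in measure on every unit interval, and the weak bound makes
`(T_j f_n)_j` converge in measure to `(T_j f)_j` there, as functions with values in the space of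
sequences under the uniform metric `sup_j |z_j - w_j|`. Along a common subsequence both
convergences hold almost everywhere. At almost every point `T_j f_n → T_j f` is then uniform in
`j`, so the limits in `j` and `n` may be interchanged: `lim_j T_j f = lim_n lim_j T_j f_n = f`.
-/

open scoped Topology NNReal ENNReal

section General

variable {ι κ : Type*} {l : Filter ι} {u : Filter κ}

theorem tendsto_const_mul_div_rpow_zero {a : κ → ℝ≥0∞} {b c : ℝ≥0∞} {q : ℝ}
    (ha : Tendsto a u (𝓝 0)) (hb : b ≠ 0) (hc : c ≠ ∞) (hq : 0 < q) :
    Tendsto (fun n => c * (a n / b) ^ q) u (𝓝 0) := by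
  have ratio_rpow_tendsto := (ENNReal.Tendsto.div_const ha (.inr hb)).ennrpow_const q
  simpa only [ENNReal.zero_div, ENNReal.zero_rpow_of_pos hq, mul_zero] using
    ENNReal.Tendsto.const_mul ratio_rpow_tendsto (.inr hc)

theorem ae_of_forall_ae_restrict_Icc_intCast {μ : Measure ℝ} {P : ℝ → Prop}
    (h : ∀ m : ℤ, ∀ᵐ s ∂μ.restrict (Set.Icc (m : ℝ) (m + 1)), P s) : ∀ᵐ s ∂μ, P s := by
  rwa [← Measure.restrict_univ (μ := μ), ← iUnion_Icc_intCast ℝ, ae_restrict_iUnion_iff]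

theorem tendsto_of_tendsto_uniformFun {E : Type*} [UniformSpace E] [u.NeBot]
    {F : κ → ι → E} {G : ι → E} {f : κ → E} {g : E}
    (hF : ∀ n, Tendsto (F n) l (𝓝 (f n)))
    (hFG : Tendsto (fun n => UniformFun.ofFun (F n)) u (𝓝 (UniformFun.ofFun G)))
    (hfg : Tendsto f u (𝓝 g)) : Tendsto G l (𝓝 g) :=
  ((UniformFun.tendsto_iff_tendstoUniformly.1 hFG).tendstoUniformlyOnFilter.mono_right
    le_top).tendsto_of_eventually_tendsto (.of_forall hF) hfg

theorem ae_tendsto_of_tendstoInMeasure_uniformFun {α E : Type*} [MeasurableSpace α]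
    {μ : Measure α} [PseudoEMetricSpace E] [u.NeBot] [u.IsCountablyGenerated]
    {F : κ → ι → α → E} {G : ι → α → E} {f : κ → α → E} {g : α → E}
    (hF : ∀ n, ∀ᵐ x ∂μ, Tendsto (fun j => F n j x) l (𝓝 (f n x)))
    (hFG : TendstoInMeasure μ (fun n x => UniformFun.ofFun fun j => F n j x) u
      (fun x => UniformFun.ofFun fun j => G j x))
    (hfg : TendstoInMeasure μ f u g) :
    ∀ᵐ x ∂μ, Tendsto (fun j => G j x) l (𝓝 (g x)) := by
  obtain ⟨ns, hns, hFG_ae⟩ := hFG.exists_seq_tendsto_ae'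
  obtain ⟨ms, hms, hfg_ae⟩ := (hfg.comp hns).exists_seq_tendsto_ae'
  filter_upwards [hFG_ae, hfg_ae, ae_all_iff.2 fun k => hF (ns (ms k))] with x hFGx hfgx hFx
  exact tendsto_of_tendsto_uniformFun hFx (hFGx.comp hms) hfgx

end General

section Stepanov

variable {ι κ : Type*} {l : Filter ι} {u : Filter κ} {p q : ℝ} {C : ℝ≥0}

theorem eLpNorm_restrict_Icc_le_stepanov (hp : 0 < p) (f : ℝ → ℂ) (x : ℝ) :
    eLpNorm f (ENNReal.ofReal p) (volume.restrict (Set.Icc x (x + 1))) ≤ stepanov p f := by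
  rw [eLpNorm_eq_lintegral_rpow_enorm_toReal (ENNReal.ofReal_pos.2 hp).ne' ENNReal.ofReal_ne_top,
    ENNReal.toReal_ofReal hp.le, ← Measure.restrict_congr_set Ioc_ae_eq_Icc]
  exact ENNReal.rpow_le_rpow
    (le_iSup (fun y : ℝ => ∫⁻ s in Set.Ioc y (y + 1), ‖f s‖ₑ ^ p) x) (by positivity)

theorem tendstoInMeasure_of_tendsto_stepanov (hp : 0 < p) {f : κ → ℝ → ℂ} {g : ℝ → ℂ}
    (hf : ∀ n, AEStronglyMeasurable (f n)) (hg : AEStronglyMeasurable g)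
    (hfg : Tendsto (fun n => stepanov p (f n - g)) u (𝓝 0)) (x : ℝ) :
    TendstoInMeasure (volume.restrict (Set.Icc x (x + 1))) f u g :=
  tendstoInMeasure_of_tendsto_eLpNorm (ENNReal.ofReal_pos.2 hp).ne' (fun n => (hf n).restrict)
    hg.restrict (tendsto_of_tendsto_of_tendsto_of_le_of_le tendsto_const_nhds hfg
      (fun _ => zero_le) fun n => eLpNorm_restrict_Icc_le_stepanov hp (f n - g) x)

/-- The weak `p`–`q` Stepanov bound with constant `C` for the maximal operator
`g ↦ sup_j |T_j g|` of a family of additive maps `T_j` on `D`. The supremum over unit intervals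
is encoded as a bound at every left endpoint `x`. -/
def WeakStepanovBound (p q : ℝ) (C : ℝ≥0) {D : AddSubgroup (ℝ → ℂ)}
    (T : ι → D →+ (ℝ → ℂ)) : Prop :=
  ∀ (g : D) (lam : ℝ), 0 < lam → ∀ x : ℝ,
    volume {s ∈ Set.Icc x (x + 1) | ENNReal.ofReal lam < ⨆ j, ‖T j g s‖ₑ}
      ≤ C * (stepanov p (g : ℝ → ℂ) / ENNReal.ofReal lam) ^ q

theorem WeakStepanovBound.tendstoInMeasure_uniformFun {D : AddSubgroup (ℝ → ℂ)}
    {T : ι → D →+ (ℝ → ℂ)} (hT : WeakStepanovBound p q C T) (hq : 0 < q) {f : D} {fn : κ → D}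
    (hconv : Tendsto (fun n => stepanov p ((fn n : ℝ → ℂ) - (f : ℝ → ℂ))) u (𝓝 0)) (x : ℝ) :
    TendstoInMeasure (volume.restrict (Set.Icc x (x + 1)))
      (fun n s => UniformFun.ofFun fun j => T j (fn n) s) u
      (fun s => UniformFun.ofFun fun j => T j f s) := by
  intro ε hε
  obtain ⟨lam, -, hlam, hlam_lt⟩ := ENNReal.lt_iff_exists_real_btwn.1 hε
  have bound_tendsto := tendsto_const_mul_div_rpow_zero hconv hlam.ne'
    (ENNReal.coe_ne_top (r := C)) hq
  refine tendsto_of_tendsto_of_tendsto_of_le_of_le tendsto_const_nhds bound_tendsto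
    (fun _ => zero_le) fun n => le_trans ?_ (hT (fn n - f) lam (ENNReal.ofReal_pos.1 hlam) x)
  rw [Measure.restrict_apply' measurableSet_Icc]
  refine measure_mono fun s hs => ⟨hs.2, hlam_lt.trans_le (hs.1.trans_eq ?_)⟩
  simp only [UniformFun.edist_def, UniformFun.toFun_ofFun, edist_eq_enorm_sub, map_sub,
    Pi.sub_apply]

theorem stmt_0_general [u.NeBot] [u.IsCountablyGenerated] (hp : 0 < p) (hq : 0 < q)
    {D : AddSubgroup (ℝ → ℂ)} (hD : ∀ g ∈ D, AEStronglyMeasurable g)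
    {T : ι → D →+ (ℝ → ℂ)} (hT : WeakStepanovBound p q C T) {f : D} {fn : κ → D}
    (hconv : Tendsto (fun n => stepanov p ((fn n : ℝ → ℂ) - (f : ℝ → ℂ))) u (𝓝 0))
    (hae : ∀ n, ∀ᵐ x : ℝ, Tendsto (fun j => T j (fn n) x) l (𝓝 ((fn n : ℝ → ℂ) x))) :
    ∀ᵐ x : ℝ, Tendsto (fun j => T j f x) l (𝓝 ((f : ℝ → ℂ) x)) :=
  ae_of_forall_ae_restrict_Icc_intCast fun m =>
    ae_tendsto_of_tendstoInMeasure_uniformFun (fun n => ae_restrict_of_ae (hae n))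
      (hT.tendstoInMeasure_uniformFun hq hconv m)
      (tendstoInMeasure_of_tendsto_stepanov hp (fun n => hD _ (fn n).2) (hD _ f.2) hconv m)

end Stepanov

theorem stmt_0 (p q C : ℝ) (hp : 1 ≤ p) (hq : 1 ≤ q) (hC : 0 < C)
    (D : Submodule ℂ (ℝ → ℂ)) (hD : ∀ g ∈ D, Measurable g)
    (T : ℕ → (D →ₗ[ℂ] (ℝ → ℂ)))
    (hTmeas : ∀ (j : ℕ) (g : D), Measurable (T j g))
    (hweak : ∀ (g : D) (lam : ℝ), 0 < lam → ∀ x : ℝ,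
      volume {s ∈ Set.Icc x (x + 1) |
          ENNReal.ofReal lam < ⨆ j : ℕ, (‖T j g s‖₊ : ENNReal)}
        ≤ ENNReal.ofReal C * (stepanov p (g : ℝ → ℂ) / ENNReal.ofReal lam) ^ q)
    (f : D) (fn : ℕ → D)
    (hconv : Tendsto (fun n => stepanov p ((fn n : ℝ → ℂ) - (f : ℝ → ℂ)))
      atTop (nhds 0))
    (hae : ∀ n : ℕ, ∀ᵐ x : ℝ,
      Tendsto (fun j => T j (fn n) x) atTop (nhds ((fn n : ℝ → ℂ) x))) :
    ∀ᵐ x : ℝ, Tendsto (fun j => T j f x) atTop (nhds ((f : ℝ → ℂ) x)) := by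
  exact stmt_0_general (C := C.toNNReal) (D := D.toAddSubgroup)
    (T := fun j => (T j).toAddMonoidHom) (zero_lt_one.trans_le hp) (zero_lt_one.trans_le hq)
    (fun g hg => (hD g hg).aestronglyMeasurable) hweak hconv hae
end

section
/- Let α > 0 and let (λ_k)_{k ∈ ℤ} be a strictly increasing sequence of real numbers with λ_{k+1} − λ_k > α for all k ∈ ℤ. Then for every (a_j)_{j ∈ ℤ} ∈ ℓ²(ℤ; ℂ), the series (T a)_j := Σ_{k ∈ ℤ, k ≠ j} a_k / (λ_j − λ_k) converges absolutely for each j ∈ ℤ, the resulting sequence (T a)_j lies in ℓ²(ℤ; ℂ), and ‖(T a)_j‖_{ℓ²} ≤ (π/α) ‖(a_j)‖_{ℓ²}. -/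
/-!
The argument of Montgomery and Vaughan. Let `W` be a finite section of the operator, with entries
`w k l = 1 / (x k - x l)` off the diagonal. For distinct `j`, `k`, `l`, partial fractions give
`w k j * w l j = w k l * (w l j - w k j)`, so that `W Wᵀ = [W, D] + R` where `D` is the diagonal
matrix of the row sums of `W`, and `R` has entries `2 (w k l)²` off the diagonal and `∑ j, (w k j)²`
on it. As `W` is real and skew-symmetric, `iW` is Hermitian with square `W Wᵀ`; the quadratic form
of a commutator `[iW, ·]` vanishes on the eigenvectors of `iW`, whence `‖W‖² ≤ ‖R‖`. By Gershgorin
`‖R‖` is at most the largest row sum of `R`, namely `3 ∑ j, (w k j)²`, and separation by `α`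
bounds this by `3 ∑ 1 / (α m)² = (π / α)²`, the sum being over the nonzero integers `m`.
-/

open Filter Finset Function Matrix Topology
open scoped InnerProductSpace Matrix.Norms.L2Operator

section HilbertMatrix

variable {ι K : Type*} [Field K]

/-- The generalised Hilbert matrix with entries `1 / (x j - x k)` attached to a family of nodes `x`;
its diagonal vanishes because `0⁻¹ = 0`. -/
def hilbertMatrix (x : ι → K) : Matrix ι ι K :=
  of fun j k => (x j - x k)⁻¹

@[simp]
theorem hilbertMatrix_apply (x : ι → K) (j k : ι) : hilbertMatrix x j k = (x j - x k)⁻¹ :=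
  rfl

theorem hilbertMatrix_transpose (x : ι → K) : (hilbertMatrix x)ᵀ = -hilbertMatrix x := by
  ext j k
  simp [← inv_neg]

theorem hilbertMatrix_apply_mul_apply [DecidableEq ι] {x : ι → K} (hx : Injective x) {k l : ι}
    (hkl : k ≠ l) (j : ι) :
    hilbertMatrix x k j * hilbertMatrix x l j =
      hilbertMatrix x k l * (hilbertMatrix x l j - hilbertMatrix x k j)
        + ((if j = k then hilbertMatrix x k l ^ 2 else 0)
          + if j = l then hilbertMatrix x k l ^ 2 else 0) := by
  have hkl' : x k - x l ≠ 0 := sub_ne_zero.2 (hx.ne hkl)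
  rcases eq_or_ne j k with rfl | hjk
  · have hlj : x l - x j ≠ 0 := sub_ne_zero.2 (hx.ne hkl.symm)
    simp only [hilbertMatrix_apply, sub_self, _root_.inv_zero, if_true, if_neg hkl]
    field_simp
    ring
  rcases eq_or_ne j l with rfl | hjl
  · simp [hjk, sq]
  have hkj : x k - x j ≠ 0 := sub_ne_zero.2 (hx.ne hjk.symm)
  have hlj : x l - x j ≠ 0 := sub_ne_zero.2 (hx.ne hjl.symm)
  simp only [hilbertMatrix_apply, if_neg hjk, if_neg hjl, add_zero]
  field_simp
  ring

theorem hilbertMatrix_mul_transpose_self [Fintype ι] [DecidableEq ι] {x : ι → K}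
    (hx : Injective x) :
    hilbertMatrix x * (hilbertMatrix x)ᵀ =
      ⁅hilbertMatrix x, diagonal fun k => ∑ j, hilbertMatrix x k j⁆
        + (of (fun k l => 2 * hilbertMatrix x k l ^ 2)
          + diagonal fun k => ∑ j, hilbertMatrix x k j ^ 2) := by
  ext k l
  rw [mul_apply]
  simp only [Ring.lie_def, transpose_apply, Matrix.add_apply, Matrix.sub_apply,
    Matrix.mul_diagonal, Matrix.diagonal_mul, of_apply]
  rcases eq_or_ne k l with rfl | hkl
  · simp [sq]
  · simp only [hilbertMatrix_apply_mul_apply hx hkl, diagonal_apply_ne _ hkl, sum_add_distrib,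
      ← mul_sum, sum_sub_distrib, sum_ite_eq', mem_univ, if_true]
    ring

end HilbertMatrix

section Hermitian

variable {𝕜 : Type*} [RCLike 𝕜]

theorem inner_lie_apply_eq_zero_of_apply_eq_smul {E : Type*} [NormedAddCommGroup E]
    [InnerProductSpace 𝕜 E] {T : E →L[𝕜] E} (hT : T.IsSymmetric) (D : E →L[𝕜] E) {v : E} {μ : ℝ}
    (hv : T v = (μ : 𝕜) • v) : ⟪v, ⁅T, D⁆ v⟫_𝕜 = 0 := by
  have hTD : ⟪v, T (D v)⟫_𝕜 = ⟪T v, D v⟫_𝕜 := (hT v (D v)).symm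
  rw [Ring.lie_def, _root_.sub_apply, mul_apply_eq_comp,
    mul_apply_eq_comp, inner_sub_right, hTD, hv, map_smul, inner_smul_left,
    inner_smul_right, RCLike.conj_ofReal, sub_self]

variable {n : Type*} [Fintype n] [DecidableEq n] {A : Matrix n n 𝕜}

theorem l2_opNorm_eq_norm_eigenvalues (hA : A.IsHermitian) : ‖A‖ = ‖hA.eigenvalues‖ := by
  conv_lhs => rw [hA.spectral_theorem, Unitary.conjStarAlgAut_apply]
  rw [← Unitary.coe_star, CStarRing.norm_mul_coe_unitary, CStarRing.norm_coe_unitary_mul,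
    l2_opNorm_diagonal]
  simp [Pi.norm_def]

theorem l2_opNorm_le_of_forall_sum_norm_le (hA : A.IsHermitian) {C : ℝ} (hC : 0 ≤ C)
    (h : ∀ k, ∑ j, ‖A k j‖ ≤ C) : ‖A‖ ≤ C := by
  rw [l2_opNorm_eq_norm_eigenvalues hA, pi_norm_le_iff_of_nonneg hC]
  intro i
  have hμ : Module.End.HasEigenvalue (toLin' A) (hA.eigenvalues i : 𝕜) := by
    rw [Module.End.hasEigenvalue_iff_mem_spectrum, spectrum_toLin']
    exact hA.eigenvalues_mem_spectrum_real i
  obtain ⟨k, hk⟩ := eigenvalue_mem_ball hμ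
  rw [mem_closedBall_iff_norm] at hk
  calc ‖hA.eigenvalues i‖ = ‖(hA.eigenvalues i : 𝕜)‖ := (RCLike.norm_ofReal _).symm
    _ ≤ ‖A k k‖ + ‖(hA.eigenvalues i : 𝕜) - A k k‖ := norm_le_norm_add_norm_sub' _ _
    _ ≤ ‖A k k‖ + ∑ j ∈ univ.erase k, ‖A k j‖ := by gcongr
    _ = ∑ j, ‖A k j‖ := add_sum_erase _ (fun j => ‖A k j‖) (mem_univ k)
    _ ≤ C := h k

theorem l2_opNorm_sq_le_of_mul_self_eq_lie_add (hA : A.IsHermitian) {D R : Matrix n n 𝕜}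
    (h : A * A = ⁅A, D⁆ + R) : ‖A‖ ^ 2 ≤ ‖R‖ := by
  suffices hle : ∀ i, |hA.eigenvalues i| ≤ √‖R‖ by
    rw [← Real.le_sqrt (norm_nonneg _) (norm_nonneg _), l2_opNorm_eq_norm_eigenvalues hA]
    exact (pi_norm_le_iff_of_nonneg (Real.sqrt_nonneg _)).2 hle
  intro i
  set μ := hA.eigenvalues i
  set v := hA.eigenvectorBasis i
  let op : Matrix n n 𝕜 ≃⋆ₐ[𝕜] (EuclideanSpace 𝕜 n →L[𝕜] EuclideanSpace 𝕜 n) := toEuclideanCLM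
  have hv : ‖v‖ = 1 := hA.eigenvectorBasis.orthonormal.1 i
  have hAv : op A v = (μ : 𝕜) • v := by
    ext j
    simpa [op, RCLike.real_smul_eq_coe_mul] using congrFun (hA.mulVec_eigenvectorBasis i) j
  have hlie : ⟪v, op ⁅A, D⁆ v⟫_𝕜 = 0 := by
    have hsymm : (op A).IsSymmetric := (IsSelfAdjoint.map hA op).isSymmetric
    simpa only [Ring.lie_def, map_sub, map_mul] using
      inner_lie_apply_eq_zero_of_apply_eq_smul hsymm (op D) hAv
  have hR : ⟪v, op R v⟫_𝕜 = (μ : 𝕜) ^ 2 := by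
    calc ⟪v, op R v⟫_𝕜 = ⟪v, op (A * A) v⟫_𝕜 := by
          rw [h, map_add, _root_.add_apply, inner_add_right, hlie, zero_add]
      _ = (μ : 𝕜) ^ 2 := by
          rw [map_mul, mul_apply_eq_comp, hAv, map_smul, hAv, inner_smul_right, inner_smul_right,
            inner_self_eq_norm_sq_to_K, hv, RCLike.ofReal_one, one_pow, mul_one, sq]
  refine Real.abs_le_sqrt ?_
  calc μ ^ 2 = ‖⟪v, op R v⟫_𝕜‖ := by simp [hR]
    _ ≤ ‖v‖ * ‖op R v‖ := norm_inner_le_norm _ _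
    _ ≤ ‖v‖ * (‖R‖ * ‖v‖) := by gcongr; exact (op R).le_opNorm v
    _ = ‖R‖ := by simp [hv]

end Hermitian

theorem isHermitian_I_smul_hilbertMatrix_ofReal {ι : Type*} (x : ι → ℝ) :
    (Complex.I • hilbertMatrix fun j => (x j : ℂ)).IsHermitian := by
  ext k l
  have hskew := congrFun₂ (hilbertMatrix_transpose fun j => (x j : ℂ)) k l
  simp only [transpose_apply, Matrix.neg_apply] at hskew
  rw [conjTranspose_apply, Matrix.smul_apply, hskew]
  simp

theorem hilbertMatrix_l2_opNorm_sq_le {ι : Type*} [Fintype ι] [DecidableEq ι] {x : ι → ℝ}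
    (hx : Injective x) {B : ℝ} (hB₀ : 0 ≤ B) (hB : ∀ k, ∑ j, ((x k - x j)⁻¹) ^ 2 ≤ B) :
    ‖hilbertMatrix fun j => (x j : ℂ)‖ ^ 2 ≤ 3 * B := by
  set W := hilbertMatrix fun j => (x j : ℂ) with hW
  set Q : Matrix ι ι ℂ := diagonal fun k => ∑ j, W k j ^ 2
  set R : Matrix ι ι ℂ := of (fun k l => 2 * W k l ^ 2) + Q
  have hWstar : ∀ k l, star (W k l) = W k l := by simp [hW]
  have hWT : Wᵀ = -W := hilbertMatrix_transpose _
  have hsq : (Complex.I • W) * (Complex.I • W) =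
      ⁅Complex.I • W, -Complex.I • diagonal fun k => ∑ j, W k j⁆ + R := by
    calc (Complex.I • W) * (Complex.I • W) = W * Wᵀ := by
          rw [hWT, smul_mul_smul_comm, Complex.I_mul_I, neg_one_smul, mul_neg]
      _ = ⁅W, diagonal fun k => ∑ j, W k j⁆ + R :=
          hilbertMatrix_mul_transpose_self (Complex.ofReal_injective.comp hx)
      _ = _ := by simp [Ring.lie_def, smul_smul]
  have hRherm : R.IsHermitian := by
    ext k l
    have hskew : W l k = -W k l := congrFun₂ hWT k l
    rcases eq_or_ne k l with rfl | hkl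
    · simp [R, Q, hWstar, -RCLike.star_def]
    · simp [R, Q, hkl, hkl.symm, hskew, hWstar, -RCLike.star_def]
  have hRsum : ∀ k, ∑ l, ‖R k l‖ ≤ 3 * B := by
    intro k
    have hWB : ∑ l, ‖W k l‖ ^ 2 ≤ B := by simpa [hW, ← Complex.ofReal_sub] using hB k
    calc ∑ l, ‖R k l‖ ≤ ∑ l, (2 * ‖W k l‖ ^ 2 + ‖Q k l‖) := by
          gcongr with l
          exact (norm_add_le _ _).trans_eq (by simp)
      _ = 2 * ∑ l, ‖W k l‖ ^ 2 + ‖∑ l, W k l ^ 2‖ := by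
          simp [Q, sum_add_distrib, mul_sum, diagonal_apply, apply_ite norm]
      _ ≤ 2 * B + B := by
          gcongr
          exact (norm_sum_le _ _).trans (by simpa using hWB)
      _ = 3 * B := by ring
  calc ‖W‖ ^ 2 = ‖Complex.I • W‖ ^ 2 := by simp [norm_smul]
    _ ≤ ‖R‖ := l2_opNorm_sq_le_of_mul_self_eq_lie_add
        (isHermitian_I_smul_hilbertMatrix_ofReal x) hsq
    _ ≤ 3 * B := l2_opNorm_le_of_forall_sum_norm_le hRherm (by positivity) hRsum

section RoundTowardZero

variable {F : Type*} [Field F] [LinearOrder F] [IsStrictOrderedRing F] [FloorRing F]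

/-- The integer part of `t`, rounded towards zero: it maps a `1`-separated set containing `0`
injectively into the integers without increasing absolute values, which `⌊t⌋` fails to do. -/
def truncate (t : F) : ℤ :=
  if 0 ≤ t then ⌊t⌋ else ⌈t⌉

theorem abs_truncate_le (t : F) : |(truncate t : F)| ≤ |t| := by
  unfold truncate
  split_ifs with ht
  · rw [abs_of_nonneg ht, abs_of_nonneg (mod_cast Int.floor_nonneg.2 ht)]
    exact Int.floor_le t
  · have hceil : (⌈t⌉ : F) ≤ 0 := mod_cast Int.ceil_le.2 (by simpa using (not_le.1 ht).le)
    rw [abs_of_neg (not_le.1 ht), abs_of_nonpos hceil]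
    exact neg_le_neg (Int.le_ceil t)

theorem abs_sub_lt_one_of_truncate_eq {s t : F} (h : truncate s = truncate t) :
    |s - t| < 1 ∨ |s| < 1 ∧ |t| < 1 := by
  have hmixed : ∀ ⦃a b : F⦄, 0 ≤ a → b < 0 → ⌊a⌋ = ⌈b⌉ → |a| < 1 ∧ |b| < 1 := by
    intro a b ha hb hab
    have hfloor : ⌊a⌋ = 0 := le_antisymm (hab ▸ Int.ceil_le.2 (by simpa using hb.le))
      (Int.floor_nonneg.2 ha)
    rw [abs_of_nonneg ha, abs_of_neg hb]
    exact ⟨(Int.floor_eq_zero_iff.1 hfloor).2,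
      neg_lt.1 (Int.ceil_eq_zero_iff.1 (hab ▸ hfloor)).1⟩
  unfold truncate at h
  split_ifs at h with hs ht ht
  · exact .inl (Int.abs_sub_lt_one_of_floor_eq_floor h)
  · exact .inr (hmixed hs (not_le.1 ht) h)
  · exact .inr (hmixed ht (not_le.1 hs) h.symm).symm
  · rw [← neg_inj, ← Int.floor_neg, ← Int.floor_neg] at h
    rw [abs_sub_comm, ← neg_sub_neg]
    exact .inl (Int.abs_sub_lt_one_of_floor_eq_floor h)

end RoundTowardZero

theorem hasSum_int_one_div_sq : HasSum (fun n : ℤ => 1 / (n : ℝ) ^ 2) (Real.pi ^ 2 / 3) := by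
  have hnat := hasSum_zeta_two
  have hval : Real.pi ^ 2 / 3 = Real.pi ^ 2 / 6 + Real.pi ^ 2 / 6 - 1 / ((0 : ℤ) : ℝ) ^ 2 := by
    simp
    ring
  rw [hval]
  exact HasSum.of_nat_of_neg (by simpa using hnat) (by simpa using hnat)

theorem summable_norm_tsum_sq_and_tsum_le {ι E : Type*} [NormedAddCommGroup E] {f : ι → ι → E}
    (hf : ∀ j, Summable (f j)) {C : ℝ} (hC : ∀ s : Finset ι, ∑ j ∈ s, ‖∑ k ∈ s, f j k‖ ^ 2 ≤ C) :
    (Summable fun j => ‖∑' k, f j k‖ ^ 2) ∧ ∑' j, ‖∑' k, f j k‖ ^ 2 ≤ C := by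
  have hfin : ∀ s : Finset ι, ∑ j ∈ s, ‖∑' k, f j k‖ ^ 2 ≤ C := fun s => by
    have hlim : Tendsto (fun t : Finset ι => ∑ j ∈ s, ‖∑ k ∈ t, f j k‖ ^ 2) atTop
        (𝓝 (∑ j ∈ s, ‖∑' k, f j k‖ ^ 2)) :=
      tendsto_finsetSum _ fun j _ => (hf j).hasSum.norm.pow 2
    refine le_of_tendsto hlim ?_
    filter_upwards [eventually_ge_atTop s] with t hst
    exact (sum_le_sum_of_subset_of_nonneg hst fun _ _ _ => by positivity).trans (hC t)
  have hsum := summable_of_sum_le (fun _ => by positivity) hfin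
  exact ⟨hsum, hsum.tsum_le_of_sum_le hfin⟩

section Separated

variable {ι : Type*} {α : ℝ} {x : ι → ℝ}

theorem pairwise_le_abs_sub_of_monotone [LinearOrder ι] [One ι] [Add ι] [SuccAddOrder ι]
    (hx : Monotone x) (hstep : ∀ k, α ≤ x (k + 1) - x k) :
    Pairwise fun j k => α ≤ |x j - x k| := by
  have hlt : ∀ ⦃j k⦄, j < k → α ≤ |x j - x k| := fun j k hjk => by
    calc α ≤ x (j + 1) - x j := hstep j
      _ ≤ x k - x j := by gcongr; exact hx (Order.add_one_le_of_lt hjk)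
      _ ≤ |x j - x k| := by rw [abs_sub_comm]; exact le_abs_self _
  intro j k hjk
  rcases hjk.lt_or_gt with h | h
  · exact hlt h
  · rw [abs_sub_comm]
    exact hlt h

theorem exists_injective_int_mul_abs_le_abs_sub (hα : 0 < α)
    (hx : Pairwise fun j k => α ≤ |x j - x k|) (k : ι) :
    ∃ f : ι → ℤ, Injective f ∧ f k = 0 ∧ ∀ j, α * |(f j : ℝ)| ≤ |x k - x j| := by
  have hsep : ∀ ⦃i j⦄, i ≠ j → 1 ≤ |(x i - x k) / α - (x j - x k) / α| := fun i j hij => by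
    rw [← sub_div, sub_sub_sub_cancel_right, abs_div, abs_of_pos hα, one_le_div hα]
    exact hx hij
  have hsep_zero : ∀ ⦃j⦄, |(x j - x k) / α| < 1 → j = k := fun j hj => by
    by_contra hjk
    simpa using (hsep hjk).not_gt (by simpa using hj)
  refine ⟨fun j => truncate ((x j - x k) / α), fun i j hij => ?_, by simp [truncate],
    fun j => ?_⟩
  · rcases abs_sub_lt_one_of_truncate_eq hij with hlt | ⟨hi, hj⟩
    · by_contra hne
      exact (hsep hne).not_gt hlt
    · rw [hsep_zero hi, hsep_zero hj]
  · calc α * |(truncate ((x j - x k) / α) : ℝ)| ≤ α * |(x j - x k) / α| :=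
          mul_le_mul_of_nonneg_left (abs_truncate_le _) hα.le
      _ = |x k - x j| := by
          rw [abs_div, abs_of_pos hα, mul_div_cancel₀ _ hα.ne', abs_sub_comm]

theorem sum_inv_sub_sq_le (hα : 0 < α) (hx : Pairwise fun j k => α ≤ |x j - x k|) (k : ι)
    (s : Finset ι) : ∑ j ∈ s, ((x k - x j)⁻¹) ^ 2 ≤ Real.pi ^ 2 / (3 * α ^ 2) := by
  obtain ⟨f, hf, hfk, hle⟩ := exists_injective_int_mul_abs_le_abs_sub hα hx k
  have hterm : ∀ j, ((x k - x j)⁻¹) ^ 2 ≤ (α ^ 2)⁻¹ * (1 / (f j : ℝ) ^ 2) := by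
    intro j
    rcases eq_or_ne j k with rfl | hjk
    · simp [hfk]
    have hfj : (f j : ℝ) ≠ 0 := by exact_mod_cast hfk ▸ hf.ne hjk
    rw [one_div, ← mul_inv, ← mul_pow, inv_pow, ← sq_abs (x k - x j), ← sq_abs (α * _), abs_mul,
      abs_of_pos hα]
    gcongr
    exact hle j
  calc ∑ j ∈ s, ((x k - x j)⁻¹) ^ 2 ≤ ∑ j ∈ s, (α ^ 2)⁻¹ * (1 / (f j : ℝ) ^ 2) :=
        sum_le_sum fun j _ => hterm j
    _ = (α ^ 2)⁻¹ * ∑ m ∈ s.map ⟨f, hf⟩, 1 / (m : ℝ) ^ 2 := by simp [mul_sum]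
    _ ≤ (α ^ 2)⁻¹ * (Real.pi ^ 2 / 3) := by
        gcongr
        exact sum_le_hasSum _ (fun _ _ => by positivity) hasSum_int_one_div_sq
    _ = Real.pi ^ 2 / (3 * α ^ 2) := by ring

theorem hilbertMatrix_l2_opNorm_le [Fintype ι] [DecidableEq ι] (hα : 0 < α)
    (hx : Pairwise fun j k => α ≤ |x j - x k|) :
    ‖hilbertMatrix fun j => (x j : ℂ)‖ ≤ Real.pi / α := by
  have hinj : Injective x := fun j k hjk => by
    by_contra hne
    exact hα.not_ge (by simpa [hjk] using hx hne)
  refine le_of_sq_le_sq ?_ (by positivity)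
  calc ‖hilbertMatrix fun j => (x j : ℂ)‖ ^ 2 ≤ 3 * (Real.pi ^ 2 / (3 * α ^ 2)) :=
        hilbertMatrix_l2_opNorm_sq_le hinj (by positivity) fun k => sum_inv_sub_sq_le hα hx k univ
    _ = (Real.pi / α) ^ 2 := by field_simp

theorem sum_norm_sum_div_sub_sq_le (hα : 0 < α) (hx : Pairwise fun j k => α ≤ |x j - x k|)
    (a : ι → ℂ) (s : Finset ι) :
    ∑ j ∈ s, ‖∑ k ∈ s, a k / (x j - x k)‖ ^ 2 ≤ (Real.pi / α) ^ 2 * ∑ k ∈ s, ‖a k‖ ^ 2 := by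
  classical
  set W := hilbertMatrix fun j : s => (x j : ℂ)
  set v : EuclideanSpace ℂ s := WithLp.toLp 2 fun k => a k
  have hW : ‖W‖ ≤ Real.pi / α :=
    hilbertMatrix_l2_opNorm_le hα (hx.comp_of_injective Subtype.val_injective)
  have hWv : ∑ j ∈ s, ‖∑ k ∈ s, a k / (x j - x k)‖ ^ 2 = ‖toEuclideanCLM (𝕜 := ℂ) W v‖ ^ 2 := by
    rw [EuclideanSpace.norm_sq_eq, ← sum_coe_sort s]
    refine sum_congr rfl fun j _ => ?_
    rw [← sum_coe_sort s]
    simp [W, v, mulVec, dotProduct, div_eq_inv_mul]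
  have hv : ∑ k ∈ s, ‖a k‖ ^ 2 = ‖v‖ ^ 2 := by
    rw [EuclideanSpace.norm_sq_eq, ← sum_coe_sort s]
  rw [hWv, hv, ← mul_pow]
  gcongr
  exact (l2_opNorm_mulVec W v).trans (by gcongr)

theorem summable_norm_div_abs_sub (hα : 0 < α) (hx : Pairwise fun j k => α ≤ |x j - x k|)
    {a : ι → ℂ} (ha : Summable fun j => ‖a j‖ ^ 2) (j : ι) :
    Summable fun k => ‖a k‖ / |x j - x k| := by
  have hinv : Summable fun k => ((x j - x k)⁻¹) ^ 2 :=
    summable_of_sum_le (fun _ => sq_nonneg _) (sum_inv_sub_sq_le hα hx j)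
  refine .of_nonneg_of_le (fun k => by positivity) (fun k => ?_) (ha.add hinv)
  rw [div_eq_mul_inv, ← abs_inv, ← sq_abs (x j - x k)⁻¹]
  nlinarith [two_mul_le_add_sq ‖a k‖ |(x j - x k)⁻¹|, sq_nonneg ‖a k‖, sq_nonneg |(x j - x k)⁻¹|]

theorem stmt_1_general [DecidableEq ι] (hα : 0 < α) (hx : Pairwise fun j k => α ≤ |x j - x k|)
    {a : ι → ℂ} (ha : Summable fun j => ‖a j‖ ^ 2) :
    (∀ j, Summable fun k => if k = j then 0 else ‖a k‖ / |x j - x k|) ∧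
    (Summable fun j => ‖∑' k, if k = j then 0 else a k / ((x j : ℂ) - (x k : ℂ))‖ ^ 2) ∧
    (∑' j, ‖∑' k, if k = j then 0 else a k / ((x j : ℂ) - (x k : ℂ))‖ ^ 2) ^ ((1 : ℝ) / 2)
      ≤ (Real.pi / α) * (∑' j, ‖a j‖ ^ 2) ^ ((1 : ℝ) / 2) := by
  have hnorm_term : ∀ j k, (if k = j then 0 else ‖a k‖ / |x j - x k|) = ‖a k‖ / |x j - x k| :=
    fun j k => ite_eq_right_iff.2 (by rintro rfl; simp)
  have hterm : ∀ j k, (if k = j then 0 else a k / ((x j : ℂ) - x k)) = a k / (x j - x k) :=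
    fun j k => ite_eq_right_iff.2 (by rintro rfl; simp)
  simp only [hnorm_term, hterm]
  have habs := summable_norm_div_abs_sub hα hx ha
  have hrow : ∀ j, Summable fun k => a k / ((x j : ℂ) - x k) := fun j =>
    .of_norm (by simpa [← Complex.ofReal_sub] using habs j)
  have hsection : ∀ s : Finset ι, ∑ j ∈ s, ‖∑ k ∈ s, a k / ((x j : ℂ) - x k)‖ ^ 2 ≤
      (Real.pi / α) ^ 2 * ∑' k, ‖a k‖ ^ 2 := fun s =>
    (sum_norm_sum_div_sub_sq_le hα hx a s).trans <| by
      gcongr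
      exact ha.sum_le_tsum s fun _ _ => by positivity
  obtain ⟨hsum, hle⟩ := summable_norm_tsum_sq_and_tsum_le hrow hsection
  refine ⟨habs, hsum, ?_⟩
  rw [← Real.sqrt_eq_rpow, ← Real.sqrt_eq_rpow]
  calc √(∑' j, ‖∑' k, a k / ((x j : ℂ) - x k)‖ ^ 2)
      ≤ √((Real.pi / α) ^ 2 * ∑' k, ‖a k‖ ^ 2) := Real.sqrt_le_sqrt hle
    _ = Real.pi / α * √(∑' k, ‖a k‖ ^ 2) := by
        rw [Real.sqrt_mul (by positivity), Real.sqrt_sq (by positivity)]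

end Separated

/-- Hilbert–Schur inequality for separated frequencies: if `λ_{k+1} - λ_k > α > 0` for all
`k ∈ ℤ` and `(a_j) ∈ ℓ²(ℤ)`, then the series `(Ta)_j = Σ_{k ≠ j} a_k / (λ_j - λ_k)` converges
absolutely, lies in `ℓ²`, and `‖Ta‖_{ℓ²} ≤ (π/α) ‖a‖_{ℓ²}`. -/
theorem stmt_1 (α : ℝ) (hα : 0 < α) (Λ : ℤ → ℝ) (hΛ : StrictMono Λ)
    (hsep : ∀ k : ℤ, α < Λ (k + 1) - Λ k)
    (a : ℤ → ℂ) (ha : Summable fun j : ℤ => ‖a j‖ ^ 2) :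
    (∀ j : ℤ, Summable fun k : ℤ => if k = j then 0 else ‖a k‖ / |Λ j - Λ k|) ∧
    (Summable fun j : ℤ =>
      ‖∑' k : ℤ, if k = j then 0 else a k / (((Λ j : ℂ)) - (Λ k : ℂ))‖ ^ 2) ∧
    (∑' j : ℤ, ‖∑' k : ℤ, if k = j then 0 else a k / (((Λ j : ℂ)) - (Λ k : ℂ))‖ ^ 2)
        ^ ((1 : ℝ) / 2)
      ≤ (Real.pi / α) * (∑' j : ℤ, ‖a j‖ ^ 2) ^ ((1 : ℝ) / 2) :=
  stmt_1_general hα (pairwise_le_abs_sub_of_monotone hΛ.monotone fun k => (hsep k).le) ha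
end

section
/- Let f be a trigonometric polynomial, f(x) = Σ_{n=1}^N c_n e^{iλ_n x} with distinct real exponents λ_1 < ... < λ_N. Then Σ_{n=1}^N |c_n|² ≤ sup_{x ∈ ℝ} ∫_x^{x+1} |f(s)|² ds, i.e. (Σ_n |c_n|²)^{1/2} ≤ ‖f‖_{S²}. -/
/-! The Bohr mean `lim_{T → ∞} T⁻¹ ∫_0^T |f|²` of a trigonometric polynomial is `Σ |c_n|²`: after
expanding the square, every oscillating cross term averages to zero. On the other hand, the average
over `[0, kL]` is the mean of the averages over `k` consecutive windows of length `L`, so the Bohr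
mean is at most the supremum of the window averages. -/

section IntervalAverage

open Filter MeasureTheory Topology
open scoped Interval

variable {f : ℝ → ℝ} {L M m : ℝ}

lemma interval_average_le_of_forall_le {a b : ℝ} (hab : a ≠ b)
    (hf : IntervalIntegrable f volume a b) (hM : ∀ x ∈ Ι a b, f x ≤ M) :
    ⨍ x in a..b, f x ≤ M :=
  (convex_Iic M).set_average_mem isClosed_Iic (by simpa [sub_eq_zero] using hab.symm) (by simp)
    (ae_restrict_of_forall_mem measurableSet_uIoc hM) hf.def'

lemma interval_average_zero_natCast_mul_le (hL : 0 < L) (hf : LocallyIntegrable f)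
    (hM : ∀ x, ⨍ t in x..x + L, f t ≤ M) {k : ℕ} (hk : k ≠ 0) :
    ⨍ t in (0 : ℝ)..k * L, f t ≤ M := by
  have window_le (x : ℝ) : ∫ t in x..x + L, f t ≤ M * L := by
    simpa [interval_average_eq_div, div_le_iff₀ hL] using hM x
  have integral_le : ∫ t in (0 : ℝ)..k * L, f t ≤ M * (k * L) := by
    calc ∫ t in (0 : ℝ)..k * L, f t
        = ∑ j ∈ Finset.range k, ∫ t in (j * L : ℝ)..j * L + L, f t := by
          simpa [add_one_mul] using
            (intervalIntegral.sum_integral_adjacent_intervals (a := fun j : ℕ ↦ (j * L : ℝ))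
              fun j _ ↦ (hf.integrableOn_isCompact isCompact_uIcc).intervalIntegrable).symm
      _ ≤ ∑ _j ∈ Finset.range k, M * L := Finset.sum_le_sum fun j _ ↦ window_le _
      _ = M * (k * L) := by simp [mul_left_comm]
  have length_pos : 0 < k * L := by positivity
  rwa [interval_average_eq_div, sub_zero, div_le_iff₀ length_pos]

lemma le_iSup_interval_average_of_tendsto (hL : 0 < L) (hf : LocallyIntegrable f)
    (hbdd : BddAbove (Set.range fun x ↦ ⨍ t in x..x + L, f t))
    (hm : Tendsto (fun T ↦ ⨍ t in (0 : ℝ)..T, f t) atTop (𝓝 m)) :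
    m ≤ ⨆ x, ⨍ t in x..x + L, f t := by
  have windows_atTop : Tendsto (fun k : ℕ ↦ (k * L : ℝ)) atTop atTop :=
    tendsto_natCast_atTop_atTop.atTop_mul_const hL
  refine le_of_tendsto (hm.comp windows_atTop) ?_
  filter_upwards [eventually_ne_atTop 0] with k hk
  exact interval_average_zero_natCast_mul_le hL hf (le_ciSup hbdd) hk

end IntervalAverage

section TrigPoly

open Complex Filter MeasureTheory Topology
open scoped ComplexConjugate InnerProductSpace

variable {ι E : Type*} (s : Finset ι) (c : ι → E) (Λ : ι → ℝ)

/-- The trigonometric polynomial `t ↦ ∑ n ∈ s, exp (i Λ n t) • c n` with frequencies `Λ n` and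
vector-valued coefficients `c n`. The frequencies may coincide. -/
noncomputable def trigPoly [AddCommMonoid E] [Module ℂ E] (t : ℝ) : E :=
  ∑ n ∈ s, exp (I * Λ n * t) • c n

lemma norm_exp_I_mul_ofReal_mul_ofReal (δ t : ℝ) : ‖exp (I * δ * t)‖ = 1 := by
  simp [norm_exp]

lemma tendsto_interval_average_exp_I_mul (δ : ℝ) :
    Tendsto (fun T : ℝ ↦ ⨍ t in (0 : ℝ)..T, exp (I * δ * t)) atTop
      (𝓝 (if δ = 0 then 1 else 0)) := by
  split_ifs with hδ
  · refine tendsto_const_nhds.congr' ?_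
    filter_upwards [eventually_ne_atTop 0] with T hT
    simp [interval_average_eq, hδ, hT]
  · have hIδ : I * (δ : ℂ) ≠ 0 := by simp [hδ]
    have norm_average_le (T : ℝ) :
        ‖⨍ t in (0 : ℝ)..T, exp (I * δ * t)‖ ≤ |T|⁻¹ * (2 / |δ|) := by
      have norm_sub_le_two : ‖exp (I * δ * T) - exp (I * δ * (0 : ℝ))‖ ≤ 2 :=
        (norm_sub_le _ _).trans_eq <| by
          simp only [norm_exp_I_mul_ofReal_mul_ofReal, one_add_one_eq_two]
      rw [interval_average_eq, integral_exp_mul_complex hIδ, norm_smul, norm_div]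
      simp only [sub_zero, norm_inv, Real.norm_eq_abs, norm_mul, norm_I, one_mul, norm_real]
      gcongr
    refine squeeze_zero_norm norm_average_le ?_
    simpa using (tendsto_inv_atTop_zero.comp tendsto_abs_atTop_atTop).mul_const (2 / |δ|)

lemma norm_trigPoly_le [SeminormedAddCommGroup E] [NormedSpace ℂ E] (t : ℝ) :
    ‖trigPoly s c Λ t‖ ≤ ∑ n ∈ s, ‖c n‖ :=
  norm_sum_le_of_le s fun n _ ↦ by rw [norm_smul, norm_exp_I_mul_ofReal_mul_ofReal, one_mul]

lemma continuous_trigPoly [SeminormedAddCommGroup E] [NormedSpace ℂ E] :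
    Continuous (trigPoly s c Λ) := by
  unfold trigPoly
  fun_prop

variable [SeminormedAddCommGroup E] [InnerProductSpace ℂ E]

lemma norm_trigPoly_sq (t : ℝ) :
    ((‖trigPoly s c Λ t‖ ^ 2 : ℝ) : ℂ) =
      ∑ m ∈ s, ∑ n ∈ s, exp (I * (Λ n - Λ m : ℝ) * t) * ⟪c m, c n⟫_ℂ := by
  have exp_mul_conj_exp (m n : ι) :
      exp (I * Λ n * t) * conj (exp (I * Λ m * t)) = exp (I * (Λ n - Λ m : ℝ) * t) := by
    rw [← exp_conj, ← exp_add]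
    simp only [map_mul, conj_I, conj_ofReal, ofReal_sub]
    ring_nf
  calc ((‖trigPoly s c Λ t‖ ^ 2 : ℝ) : ℂ)
      = ⟪trigPoly s c Λ t, trigPoly s c Λ t⟫_ℂ := by simp [inner_self_eq_norm_sq_to_K]
    _ = ∑ m ∈ s, ∑ n ∈ s, exp (I * (Λ n - Λ m : ℝ) * t) * ⟪c m, c n⟫_ℂ := by
        rw [trigPoly, sum_inner]
        simp only [inner_sum, inner_smul_left, inner_smul_right, ← mul_assoc, exp_mul_conj_exp]

lemma interval_average_norm_trigPoly_sq (a b : ℝ) :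
    ((⨍ t in a..b, ‖trigPoly s c Λ t‖ ^ 2 : ℝ) : ℂ) =
      ∑ m ∈ s, ∑ n ∈ s, (⨍ t in a..b, exp (I * (Λ n - Λ m : ℝ) * t)) * ⟪c m, c n⟫_ℂ := by
  simp only [interval_average_eq, smul_eq_mul, ofReal_mul, real_smul,
    ← intervalIntegral.integral_ofReal, norm_trigPoly_sq]
  rw [intervalIntegral.integral_finsetSum
    fun m _ ↦ Continuous.intervalIntegrable (by fun_prop) _ _, Finset.mul_sum]
  refine Finset.sum_congr rfl fun m _ ↦ ?_
  rw [intervalIntegral.integral_finsetSum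
    fun n _ ↦ Continuous.intervalIntegrable (by fun_prop) _ _, Finset.mul_sum]
  simp only [intervalIntegral.integral_mul_const, mul_assoc]

variable {s Λ}

theorem tendsto_interval_average_norm_trigPoly_sq (hΛ : Set.InjOn Λ s) :
    Tendsto (fun T : ℝ ↦ ⨍ t in (0 : ℝ)..T, ‖trigPoly s c Λ t‖ ^ 2) atTop
      (𝓝 (∑ n ∈ s, ‖c n‖ ^ 2)) := by
  classical
  have only_diagonal : ∑ m ∈ s, ∑ n ∈ s, (if Λ n - Λ m = 0 then 1 else 0) * ⟪c m, c n⟫_ℂ =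
      ((∑ n ∈ s, ‖c n‖ ^ 2 : ℝ) : ℂ) := by
    rw [ofReal_sum]
    refine Finset.sum_congr rfl fun m hm ↦ ?_
    have sub_eq_zero_iff : ∀ n ∈ s, (Λ n - Λ m = 0 ↔ n = m) := fun n hn ↦
      sub_eq_zero.trans (hΛ.eq_iff hn hm)
    calc ∑ n ∈ s, (if Λ n - Λ m = 0 then 1 else 0) * ⟪c m, c n⟫_ℂ
        = ∑ n ∈ s, if n = m then ⟪c m, c n⟫_ℂ else 0 :=
          Finset.sum_congr rfl fun n hn ↦ by simp only [sub_eq_zero_iff n hn, ite_mul, one_mul,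
            zero_mul]
      _ = ((‖c m‖ ^ 2 : ℝ) : ℂ) := by
          simp [hm, inner_self_eq_norm_sq_to_K]
  rw [← tendsto_ofReal_iff, ← only_diagonal]
  simp only [interval_average_norm_trigPoly_sq]
  exact tendsto_finsetSum s fun m _ ↦ tendsto_finsetSum s fun n _ ↦
    (tendsto_interval_average_exp_I_mul (Λ n - Λ m)).mul_const _

theorem stmt_4_general (hΛ : Set.InjOn Λ s) {L : ℝ} (hL : 0 < L) :
    ∑ n ∈ s, ‖c n‖ ^ 2 ≤ ⨆ x : ℝ, ⨍ t in x..x + L, ‖trigPoly s c Λ t‖ ^ 2 := by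
  have hcont : Continuous fun t ↦ ‖trigPoly s c Λ t‖ ^ 2 := (continuous_trigPoly s c Λ).norm.pow 2
  refine le_iSup_interval_average_of_tendsto hL hcont.locallyIntegrable
    ⟨(∑ n ∈ s, ‖c n‖) ^ 2, ?_⟩ (tendsto_interval_average_norm_trigPoly_sq c hΛ)
  rintro _ ⟨x, rfl⟩
  exact interval_average_le_of_forall_le (by simpa using hL.ne') (hcont.intervalIntegrable _ _)
    fun t _ ↦ by gcongr; exact norm_trigPoly_le s c Λ t

end TrigPoly

/-- Parseval-type inequality: for a trigonometric polynomial `f(x) = Σ_{n<N} c_n e^{iλ_n x}`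
with strictly increasing exponents, `Σ_n |c_n|² ≤ sup_{x ∈ ℝ} ∫_x^{x+1} |f(s)|² ds`,
i.e. `(Σ_n |c_n|²)^{1/2} ≤ ‖f‖_{S²}`. -/
theorem stmt_4 (N : ℕ) (c : ℕ → ℂ) (Λ : ℕ → ℝ)
    (hmono : ∀ n, n + 1 < N → Λ n < Λ (n + 1)) :
    ∑ n ∈ Finset.range N, ‖c n‖ ^ 2
      ≤ ⨆ x : ℝ, ∫ s in x..(x + 1),
          ‖∑ n ∈ Finset.range N, c n * Complex.exp (Complex.I * (Λ n : ℂ) * (s : ℂ))‖ ^ 2 := by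
  have hΛ : StrictMonoOn Λ (Finset.range N) := by
    rw [Finset.coe_range]
    exact strictMonoOn_of_lt_add_one Set.ordConnected_Iio fun n _ _ hn ↦ hmono n hn
  simpa only [trigPoly, smul_eq_mul, mul_comm (c _), interval_average_eq, add_sub_cancel_left,
    inv_one, one_mul] using stmt_4_general c hΛ.injOn one_pos
end

section
/- Fix a sign choice ± and let f be a trigonometric polynomial, f(x) = Σ_{n=1}^N c_n e^{iλ_n x} with distinct real exponents. Then for every x ∈ ℝ, (H_± f(x))² = f(x)² + 2 Σ_{n=1}^N Σ_{m=1}^N (−i sgn_±(λ_n + λ_m)) c_n (−i sgn_±(λ_m)) c_m e^{i(λ_n + λ_m)x}; here the double sum is the frequency-by-frequency application of the multiplier −i sgn_± to the expansion of the product f · H_± f, so this identity reads (H_± f)² = f² + 2 H_±(f H_± f). -/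
/-- `sgnPM true` is `sgn₊` (value `1` at `0`); `sgnPM false` is `sgn₋` (value `-1` at `0`). -/
noncomputable def sgnPM (pos : Bool) (x : ℝ) : ℝ :=
  if pos then (if 0 ≤ x then 1 else -1) else (if 0 < x then 1 else -1)

/-!
Write `m = -i sgn_±` for the multiplier of `H_±`. Everything rests on Cotlar's identity
`m a * m b = 1 + m (a + b) * (m a + m b)`: when `sgn_± b = -sgn_± a`, `m a + m b = 0` and
`m a * m b = 1`; when `sgn_± b = sgn_± a`, `m (a + b) = m a` and `m a ^ 2 = -1`.
Multiplying by the coefficients of `f` at `a` and `b` and summing over all pairs of frequencies,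
the two halves of the right-hand term have the same sum, by the symmetry exchanging `a` and `b`.
-/

theorem sgnPM_eq_one_or_eq_neg_one (pos : Bool) (a : ℝ) : sgnPM pos a = 1 ∨ sgnPM pos a = -1 := by
  unfold sgnPM
  split_ifs <;> simp

theorem sgnPM_add_of_eq {pos : Bool} {a b : ℝ} (h : sgnPM pos a = sgnPM pos b) :
    sgnPM pos (a + b) = sgnPM pos a := by
  unfold sgnPM at *
  split_ifs at * <;> linarith

theorem sgnPM_mul_sgnPM_add_one (pos : Bool) (a b : ℝ) :
    sgnPM pos a * sgnPM pos b + 1 = sgnPM pos (a + b) * (sgnPM pos a + sgnPM pos b) := by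
  by_cases h : sgnPM pos a = sgnPM pos b
  · rw [sgnPM_add_of_eq h, ← h]
    rcases sgnPM_eq_one_or_eq_neg_one pos a with ha | ha <;> norm_num [ha]
  · have opposite : sgnPM pos b = -sgnPM pos a := by
      rcases sgnPM_eq_one_or_eq_neg_one pos a with ha | ha <;>
        rcases sgnPM_eq_one_or_eq_neg_one pos b with hb | hb <;> simp_all
    rw [opposite, add_neg_cancel, mul_zero]
    rcases sgnPM_eq_one_or_eq_neg_one pos a with ha | ha <;> norm_num [ha]

/-- The Fourier multiplier `-i sgn_±` of the modified Hilbert transform `H_±`, with the sign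
encoded as in `sgnPM`. -/
noncomputable def hilbertMultiplier (pos : Bool) (a : ℝ) : ℂ :=
  -Complex.I * (sgnPM pos a : ℂ)

theorem hilbertMultiplier_mul (pos : Bool) (a b : ℝ) :
    hilbertMultiplier pos a * hilbertMultiplier pos b =
      1 + hilbertMultiplier pos (a + b) * (hilbertMultiplier pos a + hilbertMultiplier pos b) := by
  have sgn_identity : (sgnPM pos a : ℂ) * sgnPM pos b + 1 =
      sgnPM pos (a + b) * (sgnPM pos a + sgnPM pos b) := by
    exact_mod_cast sgnPM_mul_sgnPM_add_one pos a b
  have neg_I_mul_mul_neg_I_mul (s t : ℂ) : -Complex.I * s * (-Complex.I * t) = -(s * t) := by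
    linear_combination s * t * Complex.I_mul_I
  unfold hilbertMultiplier
  rw [← mul_add, neg_I_mul_mul_neg_I_mul, neg_I_mul_mul_neg_I_mul, ← sgn_identity]
  ring

theorem sum_sum_add_swap {ι M : Type*} [AddCommMonoid M] (s : Finset ι) (F : ι → ι → M) :
    ∑ i ∈ s, ∑ j ∈ s, (F i j + F j i) = 2 • ∑ i ∈ s, ∑ j ∈ s, F i j := by
  simp only [Finset.sum_add_distrib]
  rw [Finset.sum_comm (f := fun i j => F j i), two_nsmul]

theorem sq_sum_mul_of_mul_eq_one_add {ι R : Type*} [CommSemiring R] (s : Finset ι)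
    (a u : ι → R) (w : ι → ι → R) (w_comm : ∀ i ∈ s, ∀ j ∈ s, w i j = w j i)
    (u_mul : ∀ i ∈ s, ∀ j ∈ s, u i * u j = 1 + w i j * (u i + u j)) :
    (∑ i ∈ s, u i * a i) ^ 2 =
      (∑ i ∈ s, a i) ^ 2 + 2 * ∑ i ∈ s, ∑ j ∈ s, w i j * a i * (u j * a j) := by
  have pair_identity : ∀ i ∈ s, ∀ j ∈ s, u i * a i * (u j * a j) =
      a i * a j + (w i j * a i * (u j * a j) + w j i * a j * (u i * a i)) := by
    intro i hi j hj
    calc u i * a i * (u j * a j) = u i * u j * (a i * a j) := by ring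
      _ = (1 + w i j * (u i + u j)) * (a i * a j) := by rw [u_mul i hi j hj]
      _ = _ := by rw [← w_comm i hi j hj]; ring
  calc (∑ i ∈ s, u i * a i) ^ 2
      = ∑ i ∈ s, ∑ j ∈ s, u i * a i * (u j * a j) := by rw [sq, Finset.sum_mul_sum]
    _ = ∑ i ∈ s, ∑ j ∈ s,
          (a i * a j + (w i j * a i * (u j * a j) + w j i * a j * (u i * a i))) :=
        Finset.sum_congr rfl fun i hi => Finset.sum_congr rfl (pair_identity i hi)
    _ = (∑ i ∈ s, a i) ^ 2 + 2 * ∑ i ∈ s, ∑ j ∈ s, w i j * a i * (u j * a j) := by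
        simp only [Finset.sum_add_distrib (f := fun j => a _ * a j)]
        rw [Finset.sum_add_distrib, sum_sum_add_swap s fun i j => w i j * a i * (u j * a j),
          sq, Finset.sum_mul_sum, two_nsmul, two_mul]

theorem stmt_7_general {ι : Type*} (pos : Bool) (s : Finset ι) (c : ι → ℂ) (Λ : ι → ℝ) (z : ℂ) :
    (∑ n ∈ s, hilbertMultiplier pos (Λ n) * c n * Complex.exp (Complex.I * Λ n * z)) ^ 2 =
      (∑ n ∈ s, c n * Complex.exp (Complex.I * Λ n * z)) ^ 2 +
        2 * ∑ n ∈ s, ∑ m ∈ s, hilbertMultiplier pos (Λ n + Λ m) * c n *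
          (hilbertMultiplier pos (Λ m) * c m) *
            Complex.exp (Complex.I * ((Λ n + Λ m : ℝ) : ℂ) * z) := by
  have exp_add (n m : ι) : Complex.exp (Complex.I * ((Λ n + Λ m : ℝ) : ℂ) * z) =
      Complex.exp (Complex.I * Λ n * z) * Complex.exp (Complex.I * Λ m * z) := by
    rw [← Complex.exp_add, Complex.ofReal_add, mul_add, add_mul]
  have cotlar := sq_sum_mul_of_mul_eq_one_add s
    (fun n => c n * Complex.exp (Complex.I * Λ n * z)) (fun n => hilbertMultiplier pos (Λ n))
    (fun n m => hilbertMultiplier pos (Λ n + Λ m)) (fun n _ m _ => by rw [add_comm])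
    (fun n _ m _ => hilbertMultiplier_mul pos (Λ n) (Λ m))
  simp only [exp_add]
  simpa only [mul_assoc, mul_left_comm] using cotlar

/-- For a trigonometric polynomial `f(x) = Σ_{n<N} c_n e^{iλ_n x}` with strictly increasing
exponents and either choice of sign, `(H_± f)² = f² + 2 H_±(f · H_± f)` pointwise, where the
last term is written as the frequency-by-frequency application of the multiplier `-i sgn_±`. -/
theorem stmt_7 (pos : Bool) (N : ℕ) (c : ℕ → ℂ) (Λ : ℕ → ℝ)
    (hmono : ∀ n, n + 1 < N → Λ n < Λ (n + 1)) (x : ℝ) :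
    (∑ n ∈ Finset.range N,
        (-Complex.I * (sgnPM pos (Λ n) : ℂ)) * c n
          * Complex.exp (Complex.I * (Λ n : ℂ) * (x : ℂ))) ^ 2
      = (∑ n ∈ Finset.range N,
            c n * Complex.exp (Complex.I * (Λ n : ℂ) * (x : ℂ))) ^ 2
        + 2 * ∑ n ∈ Finset.range N, ∑ m ∈ Finset.range N,
            (-Complex.I * (sgnPM pos (Λ n + Λ m) : ℂ)) * c n
              * ((-Complex.I * (sgnPM pos (Λ m) : ℂ)) * c m)
              * Complex.exp (Complex.I * ((Λ n + Λ m : ℝ) : ℂ) * (x : ℂ)) :=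
  stmt_7_general pos (Finset.range N) c Λ x
end
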